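/- Let φ₀ : M → C be a mapping and φ̃ : F → C its unique linear extension with φ̃(1) = 1 and φ̃(xy) = (ξ̃_{x₍₁₎} · φ̃(y)) · φ̃(x₍₂₎) for all x, y ∈ F. If (π ⊗ φ̃)(Δ̃(r)) = 0 in U ⊗ C for every r ∈ R, then φ̃ vanishes on the two-sided ideal ⟨R⟩ = ker π, so there exists a unique linear map φ' : U → C with φ̃ = φ' ∘ π; moreover φ'(1) = 1 and φ' satisfies the cocycle condition φ'(xy) = (ξ_{x₍₁₎} · φ'(y)) · φ'(x₍₂₎) for all x, y ∈ U. -/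

import Mathlib

open scoped TensorProduct

/-- The two-sided ideal generated by a set `R`, as a `ℂ`-submodule:
the span of all elements `a * r * b` with `r ∈ R`. -/
noncomputable def twoSidedSpan {F : Type*} [Semiring F] [Algebra ℂ F] (R : Set F) :
    Submodule ℂ F :=
  Submodule.span ℂ {x : F | ∃ a b : F, ∃ r ∈ R, x = a * r * b}

/-!
The cocycle identity makes the kernel of a cocycle a left ideal. If moreover the action is pulled
back along `π`, then `φ (r * b)` is computed from `(π ⊗ φ) (Δ r)` alone, so it vanishes for every
`b` as soon as that tensor does. Hence `φ` kills every `a * (r * b)`, that is, the two-sided ideal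
generated by the relations, and descends to the quotient; the cocycle identity descends with it
because `π` intertwines the comultiplications.
-/

theorem existsUnique_eq_comp_of_ker_le_ker {k V W X : Type*} [Ring k]
    [AddCommMonoid V] [AddCommMonoid W] [AddCommMonoid X] [Module k V] [Module k W] [Module k X]
    {f : V →ₗ[k] W} (hf : Function.Surjective f) {g : V →ₗ[k] X}
    (hfg : LinearMap.ker f ≤ LinearMap.ker g) :
    ∃! h : W →ₗ[k] X, g = h ∘ₗ f := by
  let : AddCommGroup V := Module.addCommMonoidToAddCommGroup k
  let : AddCommGroup W := Module.addCommMonoidToAddCommGroup k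
  let : AddCommGroup X := Module.addCommMonoidToAddCommGroup k
  let lift := (LinearMap.ker f).liftQ g hfg ∘ₗ (f.quotKerEquivOfSurjective hf).symm.toLinearMap
  have g_eq : g = lift ∘ₗ f := by
    ext v
    simp [lift]
  exact ⟨lift, g_eq, fun h hgh ↦ (LinearMap.cancel_right hf).1 (hgh.symm.trans g_eq)⟩

theorem freeAlgebra_lift_surjective_of_adjoin_eq_top {k A : Type*} [CommSemiring k] [Semiring A]
    [Algebra k A] {s : Set A} (hs : Algebra.adjoin k s = ⊤) :
    Function.Surjective (FreeAlgebra.lift k ((↑) : s → A)) := by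
  rw [← AlgHom.range_eq_top, ← Algebra.adjoin_eq_range_freeAlgebra_lift, hs]

section Cocycle

variable {k A C : Type*} [CommSemiring k] [Semiring A] [Algebra k A] [Semiring C] [Algebra k C]

/-- The cocycle condition `φ (x * y) = (ξ x₍₁₎ · φ y) * φ x₍₂₎` for a linear map `φ : A → C`, where
`A` acts on `C` through `ξ` and `Δ x = x₍₁₎ ⊗ x₍₂₎`. The comultiplication `Δ` is an arbitrary linear
map, so that the notion covers both a bialgebra and a lift of its comultiplication to an algebra
presenting it. -/
def IsCocycle (ξ : A →ₗ[k] C →ₗ[k] C) (Δ : A →ₗ[k] A ⊗[k] A) (φ : A →ₗ[k] C) : Prop :=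
  ∀ x y : A, φ (x * y) = LinearMap.mul' k C (TensorProduct.map (ξ.flip (φ y)) φ (Δ x))

namespace IsCocycle

theorem map_mul_eq_zero_of_right {ξ : A →ₗ[k] C →ₗ[k] C} {Δ : A →ₗ[k] A ⊗[k] A}
    {φ : A →ₗ[k] C} (hφ : IsCocycle ξ Δ φ) (x : A) {y : A} (hy : φ y = 0) : φ (x * y) = 0 := by
  rw [hφ, hy, map_zero, TensorProduct.map_zero_left, LinearMap.zero_apply, map_zero]

section Pullback

variable {V : Type*} [AddCommMonoid V] [Module k V] {p : A →ₗ[k] V} {ξ : V →ₗ[k] C →ₗ[k] C}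
  {Δ : A →ₗ[k] A ⊗[k] A} {φ : A →ₗ[k] C}

theorem map_mul_eq_zero_of_map_comul_eq_zero (hφ : IsCocycle (ξ ∘ₗ p) Δ φ)
    {x : A} (hx : TensorProduct.map p φ (Δ x) = 0) (y : A) : φ (x * y) = 0 := by
  have factor (t : A ⊗[k] A) : TensorProduct.map ((ξ ∘ₗ p).flip (φ y)) φ t =
      TensorProduct.map (ξ.flip (φ y)) LinearMap.id (TensorProduct.map p φ t) := by
    rw [TensorProduct.map_map, LinearMap.id_comp]
    rfl
  rw [hφ, factor, hx, map_zero, map_zero]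

theorem span_mul_mul_le_ker (hφ : IsCocycle (ξ ∘ₗ p) Δ φ) {R : Set A}
    (hR : ∀ r ∈ R, TensorProduct.map p φ (Δ r) = 0) :
    Submodule.span k {x : A | ∃ a b : A, ∃ r ∈ R, x = a * r * b} ≤ LinearMap.ker φ := by
  rw [Submodule.span_le]
  rintro _ ⟨a, b, r, hr, rfl⟩
  rw [SetLike.mem_coe, LinearMap.mem_ker, mul_assoc]
  exact hφ.map_mul_eq_zero_of_right a (hφ.map_mul_eq_zero_of_map_comul_eq_zero (hR r hr) b)

end Pullback

theorem of_comp_of_surjective {B : Type*} [Semiring B] [Algebra k B] {ξ : B →ₗ[k] C →ₗ[k] C}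
    {Δ : A →ₗ[k] A ⊗[k] A} {ΔB : B →ₗ[k] B ⊗[k] B} {π : A →ₐ[k] B} (hπ : Function.Surjective π)
    (hΔ : TensorProduct.map π.toLinearMap π.toLinearMap ∘ₗ Δ = ΔB ∘ₗ π.toLinearMap)
    {ψ : B →ₗ[k] C} (hψ : IsCocycle (ξ ∘ₗ π.toLinearMap) Δ (ψ ∘ₗ π.toLinearMap)) :
    IsCocycle ξ ΔB ψ := by
  intro x y
  obtain ⟨a, rfl⟩ := hπ x
  obtain ⟨b, rfl⟩ := hπ y
  calc ψ (π a * π b) = ψ (π (a * b)) := by rw [map_mul π]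
    _ = LinearMap.mul' k C (TensorProduct.map (ξ.flip (ψ (π b)) ∘ₗ π.toLinearMap)
          (ψ ∘ₗ π.toLinearMap) (Δ a)) := hψ a b
    _ = LinearMap.mul' k C (TensorProduct.map (ξ.flip (ψ (π b))) ψ
          (TensorProduct.map π.toLinearMap π.toLinearMap (Δ a))) := by
        rw [TensorProduct.map_map]
    _ = LinearMap.mul' k C (TensorProduct.map (ξ.flip (ψ (π b))) ψ (ΔB (π a))) :=
        congrArg _ (congrArg _ (LinearMap.congr_fun hΔ a))

end IsCocycle

end Cocycle

theorem stmt5_general {k F U C : Type*} [CommRing k] [Semiring F] [Algebra k F]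
    [Semiring U] [Algebra k U] [Semiring C] [Algebra k C]
    {π : F →ₐ[k] U} (hπ : Function.Surjective π) {R : Set F}
    (hker : LinearMap.ker π.toLinearMap ≤
      Submodule.span k {x : F | ∃ a b : F, ∃ r ∈ R, x = a * r * b})
    {ΔF : F →ₗ[k] F ⊗[k] F} {ΔU : U →ₗ[k] U ⊗[k] U}
    (hΔ : TensorProduct.map π.toLinearMap π.toLinearMap ∘ₗ ΔF = ΔU ∘ₗ π.toLinearMap)
    {ξ : U →ₗ[k] C →ₗ[k] C} {φ : F →ₗ[k] C} (hone : φ 1 = 1)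
    (hφ : IsCocycle (ξ ∘ₗ π.toLinearMap) ΔF φ)
    (hR : ∀ r ∈ R, TensorProduct.map π.toLinearMap φ (ΔF r) = 0) :
    (∀ x ∈ Submodule.span k {x : F | ∃ a b : F, ∃ r ∈ R, x = a * r * b}, φ x = 0) ∧
    ∃! φ' : U →ₗ[k] C, (∀ x : F, φ x = φ' (π x)) ∧ φ' 1 = 1 ∧ IsCocycle ξ ΔU φ' := by
  have hspan := hφ.span_mul_mul_le_ker hR
  obtain ⟨φ', rfl, huniq⟩ := existsUnique_eq_comp_of_ker_le_ker hπ (hker.trans hspan)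
  have lift_one : φ' 1 = 1 := by
    rw [← hone, LinearMap.comp_apply, AlgHom.toLinearMap_apply, map_one π]
  exact ⟨fun x hx ↦ hspan hx, φ', ⟨fun _ ↦ rfl, lift_one, hφ.of_comp_of_surjective hπ hΔ⟩,
    fun ψ hψ ↦ huniq ψ (LinearMap.ext hψ.1)⟩

/-- Let `U` be a bialgebra generated by `M ⊆ U`, `F` the free algebra on
`M`, `π : F → U` the canonical projection with kernel the two-sided ideal generated by a set
`R` of defining relations, and `Δ̃` a lift of the comultiplication to `F`.  Let `φ̃ : F → C`
be the linear extension with `φ̃(1) = 1` satisfying the cocycle condition for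
`ξ̃ = ξ ∘ π`.  If `(π ⊗ φ̃)(Δ̃ r) = 0` for all `r ∈ R`, then `φ̃` vanishes on the two-sided
ideal `⟨R⟩ = ker π`, and `φ̃` factors uniquely as `φ' ∘ π` with `φ'(1) = 1` and `φ'`
satisfying the cocycle condition on `U`. -/
theorem stmt5 {U C : Type*} [Semiring U] [Bialgebra ℂ U] [Semiring C] [Algebra ℂ C]
    (M : Set U) (hgen : Algebra.adjoin ℂ M = ⊤)
    -- `π : F → U`, `F := FreeAlgebra ℂ M`:
    (π : FreeAlgebra ℂ M →ₐ[ℂ] U) (hπ : π = FreeAlgebra.lift ℂ ((↑) : M → U))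
    -- the set of defining relations: `⟨R⟩ = ker π`:
    (R : Set (FreeAlgebra ℂ M))
    (hker : ∀ x : FreeAlgebra ℂ M, π x = 0 ↔ x ∈ twoSidedSpan R)
    -- the lifted comultiplication and counit on `F`:
    (Δt : FreeAlgebra ℂ M →ₐ[ℂ] FreeAlgebra ℂ M ⊗[ℂ] FreeAlgebra ℂ M)
    (hΔt : ∀ x : FreeAlgebra ℂ M,
      TensorProduct.map π.toLinearMap π.toLinearMap (Δt x) =
        Coalgebra.comul (R := ℂ) (π x))
    -- the left `U`-module structure `ξ` on `C`:
    (ξ : U →ₗ[ℂ] C →ₗ[ℂ] C)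
    (hξone : ξ 1 = LinearMap.id)
    (hξmul : ∀ x y : U, ξ (x * y) = ξ x ∘ₗ ξ y)
    (hξunit : ∀ x : U, ξ x 1 = Coalgebra.counit (R := ℂ) x • (1 : C))
    (hξleib : ∀ (x : U) (f g : C),
      ξ x (f * g) =
        LinearMap.mul' ℂ C (TensorProduct.map (ξ.flip f) (ξ.flip g)
          (Coalgebra.comul (R := ℂ) x)))
    -- the extension `φ̃ : F → C`, satisfying the cocycle condition w.r.t. `ξ̃ := ξ ∘ π`:
    (φt : FreeAlgebra ℂ M →ₗ[ℂ] C)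
    (hφtone : φt 1 = 1)
    (hφtcoc : ∀ x y : FreeAlgebra ℂ M,
      φt (x * y) =
        LinearMap.mul' ℂ C
          (TensorProduct.map ((ξ.flip (φt y)) ∘ₗ π.toLinearMap) φt (Δt x)))
    -- the hypothesis `(π ⊗ φ̃)(Δ̃(R)) = 0`:
    (hvanish : ∀ r ∈ R, TensorProduct.map π.toLinearMap φt (Δt r) = 0) :
    (∀ x ∈ twoSidedSpan R, φt x = 0) ∧
    ∃! φ' : U →ₗ[ℂ] C,
      (∀ x : FreeAlgebra ℂ M, φt x = φ' (π x)) ∧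
      φ' 1 = 1 ∧
      (∀ x y : U, φ' (x * y) =
        LinearMap.mul' ℂ C
          (TensorProduct.map (ξ.flip (φ' y)) φ' (Coalgebra.comul (R := ℂ) x))) := by
  have hsurj : Function.Surjective π :=
    hπ ▸ freeAlgebra_lift_surjective_of_adjoin_eq_top hgen
  exact stmt5_general (ΔF := Δt.toLinearMap) (ΔU := Coalgebra.comul) hsurj
    (fun x ↦ (hker x).1) (LinearMap.ext hΔt) hφtone hφtcoc hvanish
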